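/- Let f(z) = z + Σ_{n≥2} a_n z^n and g(z) = z + Σ_{n≥2} b_n z^n be analytic on the unit disk 𝔻, with f and g nonvanishing on the punctured disk 0 < |z| < 1, and suppose |a_n| ≤ 2/n and |b_n| ≤ 2/n for all n ≥ 2. Let r₆ ≈ 0.399185 be the unique root in (0,1) of the equation (5 − r)/(1 − r) + (6/r)·log(1 − r) = 0. Then the function F(z) = z^3/(f(z)g(z)) satisfies |F'(z)(z/F(z))^2 − 1| < 1 for every z with 0 < |z| < r₆; in particular F belongs to the class 𝒰 in the disk |z| < r₆. -/

import Mathlib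

/-!
Put `p = f / z` and `q = g / z`, so that `z / F = p q` and
`F' (z / F)² - 1 = p q - z (p q)' - 1`. With `x = p - 1`, `X = z p' - x` and likewise `y`, `Y` for
`q`, this is `-(X + Y + X y + Y x + x y)`. Term by term, the coefficient bounds `2 / n` give
`|x|, |y| ≤ A` and `|X|, |Y| ≤ B`, where for `r = |z|`
`r A = ∑ 2 / n · r ^ n = 2 (-log (1 - r) - r)` and
`r B = ∑ 2 (n - 2) / n · r ^ n = 2 r² / (1 - r) - 4 (-log (1 - r) - r)`, both sums over `n ≥ 2`
(`norm_sub_le_of_coeff`, `norm_deriv_sub_le_of_coeff`). The resulting bound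
`2 B + 2 A B + A²` is below `1` as soon as `2 B + A < 1`. The equation defining `r₆` says precisely
that `2 B + A = 1` at `r₆`, and `r (2 B + A)` is a power series with nonnegative coefficients
starting at `r²`, so `2 B + A ≤ r / r₆` for `r ≤ r₆` (`two_mul_tailB_add_tailA_lt`).
-/

/-- The sum of `2 / n * r ^ n` over `n ≥ 2`, in closed form. -/
noncomputable def tailA (r : ℝ) : ℝ := 2 * (-Real.log (1 - r) - r)

/-- The sum of `(n - 2) * (2 / n) * r ^ n` over `n ≥ 2`, in closed form. -/
noncomputable def tailB (r : ℝ) : ℝ := 2 * (r ^ 2 / (1 - r)) - 2 * tailA r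

lemma hasSum_of_eq {E : Type*} [AddCommMonoid E] [TopologicalSpace E] {u v : ℕ → E} {s t : E}
    (h : HasSum u s) (huv : ∀ n, v n = u n) (hst : t = s) : HasSum v t := by
  rw [hst, funext huv]
  exact h

lemma hasSum_tailA {r : ℝ} (h0 : 0 ≤ r) (h1 : r < 1) :
    HasSum (fun n : ℕ => 2 / ((n + 2 : ℕ) : ℝ) * r ^ (n + 2)) (tailA r) := by
  have h := Real.hasSum_pow_div_log_of_abs_lt_one (x := r) (by rwa [abs_of_nonneg h0])
  have h' := (hasSum_nat_add_iff' 1).2 h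
  have h2 := h'.mul_left 2
  simp only [Finset.sum_range_one] at h2
  refine hasSum_of_eq h2 (fun n => ?_) ?_
  · push_cast
    ring
  · simp [tailA]

lemma hasSum_tailB {r : ℝ} (h0 : 0 ≤ r) (h1 : r < 1) :
    HasSum (fun n : ℕ => (n : ℝ) * (2 / ((n + 2 : ℕ) : ℝ)) * r ^ (n + 2)) (tailB r) := by
  have h := (((hasSum_geometric_of_lt_one h0 h1).mul_left (r ^ 2)).mul_left 2).sub
    ((hasSum_tailA h0 h1).mul_left 2)
  refine hasSum_of_eq h (fun n => ?_) (by rw [tailB, div_eq_mul_inv])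
  have : (n : ℝ) + 2 ≠ 0 := by positivity
  push_cast
  field_simp
  ring

lemma norm_sub_le_of_coeff {f : ℂ → ℂ} {a : ℕ → ℂ} (ha0 : a 0 = 0) (ha1 : a 1 = 1)
    (hf : ∀ z ∈ Metric.ball (0:ℂ) 1, HasSum (fun n : ℕ => a n * z ^ n) (f z))
    (hA : ∀ n : ℕ, 2 ≤ n → ‖a n‖ ≤ 2 / (n : ℝ)) {z : ℂ} (hz : ‖z‖ < 1) :
    ‖f z - z‖ ≤ tailA ‖z‖ := by
  have h := (hasSum_nat_add_iff' 2).2 (hf z (by simpa using hz))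
  simp only [Finset.sum_range_succ, Finset.sum_range_zero, ha0, ha1] at h
  have h2 : HasSum (fun n : ℕ => a (n + 2) * z ^ (n + 2)) (f z - z) := by
    refine hasSum_of_eq h (fun n => rfl) ?_
    ring
  rw [← h2.tsum_eq]
  refine tsum_of_norm_bounded (hasSum_tailA (norm_nonneg z) hz) fun n => ?_
  rw [norm_mul, norm_pow]
  gcongr
  exact hA (n + 2) (by omega)

/-- Termwise differentiation of the power series of `f` on the unit disk. -/
lemma hasSum_deriv_of_coeff {f : ℂ → ℂ} {a : ℕ → ℂ} (ha0 : a 0 = 0) (ha1 : a 1 = 1)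
    (hf : ∀ z ∈ Metric.ball (0:ℂ) 1, HasSum (fun n : ℕ => a n * z ^ n) (f z))
    (hA : ∀ n : ℕ, 2 ≤ n → ‖a n‖ ≤ 2 / (n : ℝ)) {z : ℂ} (hz : ‖z‖ < 1) :
    HasSum (fun n : ℕ => a n * (n * z ^ (n - 1))) (deriv f z) := by
  obtain ⟨ρ, hzρ, hρ1⟩ := exists_between hz
  have hρ0 : 0 ≤ ρ := (norm_nonneg z).trans hzρ.le
  have ha : ∀ n, ‖a n‖ ≤ 2 := by
    intro n
    rcases n with _ | _ | n
    · simp [ha0]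
    · simp [ha1]
    · refine (hA (n + 2) (by omega)).trans ?_
      apply div_le_self (by norm_num)
      push_cast
      linarith [(Nat.cast_nonneg n : (0:ℝ) ≤ n)]
  have hzU : z ∈ Metric.ball (0:ℂ) ρ := by simpa using hzρ
  have key := Complex.hasSum_deriv_of_summable_norm (F := fun (n : ℕ) (w : ℂ) => a n * w ^ n)
    (U := Metric.ball (0:ℂ) ρ) (u := fun n => 2 * ρ ^ n)
    ((summable_geometric_of_lt_one hρ0 hρ1).mul_left 2)
    (fun n => by fun_prop) Metric.isOpen_ball
    (fun n w hw => by
      have hw' : ‖w‖ ≤ ρ := by simpa using (Metric.mem_ball.1 hw).le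
      rw [norm_mul, norm_pow]
      gcongr
      exact ha n) hzU
  have he : deriv (fun w => ∑' n : ℕ, a n * w ^ n) z = deriv f z := by
    apply Filter.EventuallyEq.deriv_eq
    filter_upwards [Metric.isOpen_ball.mem_nhds hzU] with w hw
    exact (hf w (Metric.ball_subset_ball hρ1.le hw)).tsum_eq
  rw [he] at key
  refine hasSum_of_eq key (fun n => ?_) rfl
  simp

lemma norm_deriv_sub_le_of_coeff {f : ℂ → ℂ} {a : ℕ → ℂ} (ha0 : a 0 = 0) (ha1 : a 1 = 1)
    (hf : ∀ z ∈ Metric.ball (0:ℂ) 1, HasSum (fun n : ℕ => a n * z ^ n) (f z))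
    (hA : ∀ n : ℕ, 2 ≤ n → ‖a n‖ ≤ 2 / (n : ℝ)) {z : ℂ} (hz : ‖z‖ < 1) :
    ‖z * deriv f z - 2 * f z + z‖ ≤ tailB ‖z‖ := by
  have h := (hasSum_nat_add_iff' 2).2
    (((hasSum_deriv_of_coeff ha0 ha1 hf hA hz).mul_left z).sub
      ((hf z (by simpa using hz)).mul_left 2))
  simp only [Finset.sum_range_succ, Finset.sum_range_zero, ha0, ha1] at h
  have h2 : HasSum (fun n : ℕ => (n : ℂ) * a (n + 2) * z ^ (n + 2))
      (z * deriv f z - 2 * f z + z) := by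
    refine hasSum_of_eq h (fun n => ?_) ?_
    · rw [show n + 2 - 1 = n + 1 by omega]
      push_cast
      ring
    · simp
      ring
  rw [← h2.tsum_eq]
  refine tsum_of_norm_bounded (hasSum_tailB (norm_nonneg z) hz) fun n => ?_
  rw [norm_mul, norm_mul, norm_pow, Complex.norm_natCast]
  gcongr
  exact hA (n + 2) (by omega)

/-- Since `2 * tailB + tailA` is a power series with nonnegative coefficients starting at degree
`2`, its quotient by `r` is at most `r / R` on `(0, R)` when it equals `1` at `R`. -/
lemma two_mul_tailB_add_tailA_lt {r R : ℝ} (h0 : 0 < r) (hr : r < R) (hR : R < 1)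
    (hroot : (5 - R) / (1 - R) + (6 / R) * Real.log (1 - R) = 0) :
    2 * tailB r + tailA r < r := by
  have hR0 : 0 < R := h0.trans hr
  have hS : ∀ t : ℝ, 0 ≤ t → t < 1 → HasSum (fun n : ℕ =>
      (2 * ((n : ℝ) * (2 / ((n + 2 : ℕ) : ℝ))) + 2 / ((n + 2 : ℕ) : ℝ)) * t ^ (n + 2))
      (2 * tailB t + tailA t) := by
    intro t ht0 ht1
    refine hasSum_of_eq (((hasSum_tailB ht0 ht1).mul_left 2).add (hasSum_tailA ht0 ht1))
      (fun n => ?_) rfl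
    ring
  have hval : 2 * tailB R + tailA R = R := by
    have h1R : 1 - R ≠ 0 := by linarith
    unfold tailB tailA
    field_simp at hroot ⊢
    linear_combination hroot
  have hle : 2 * tailB r + tailA r ≤ (r / R) ^ 2 * (2 * tailB R + tailA R) := by
    refine hasSum_le (fun n => ?_) (hS r h0.le (hr.trans hR))
      ((hS R hR0.le hR).mul_left ((r / R) ^ 2))
    have hpow : r ^ (n + 2) ≤ (r / R) ^ 2 * R ^ (n + 2) := by
      have e : (r / R) ^ 2 * R ^ (n + 2) = R ^ n * r ^ 2 := by
        field_simp
        ring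
      rw [e, pow_add]
      gcongr
    rw [mul_left_comm ((r / R) ^ 2)]
    exact mul_le_mul_of_nonneg_left hpow (by positivity)
  rw [hval] at hle
  refine hle.trans_lt ?_
  have e : (r / R) ^ 2 * R = r * (r / R) := by
    field_simp
  rw [e]
  exact mul_lt_of_lt_one_right h0 ((div_lt_one hR0).2 hr)


theorem radius_univalence_coeff_twoDivN_twoDivN
    (f g F : ℂ → ℂ) (a b : ℕ → ℂ)
    (hfa : AnalyticOnNhd ℂ f (Metric.ball (0:ℂ) 1))
    (hga : AnalyticOnNhd ℂ g (Metric.ball (0:ℂ) 1))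
    (ha0 : a 0 = 0) (ha1 : a 1 = 1) (hb0 : b 0 = 0) (hb1 : b 1 = 1)
    (hf : ∀ z ∈ Metric.ball (0:ℂ) 1, HasSum (fun n : ℕ => a n * z ^ n) (f z))
    (hg : ∀ z ∈ Metric.ball (0:ℂ) 1, HasSum (fun n : ℕ => b n * z ^ n) (g z))
    (hfne : ∀ z : ℂ, 0 < ‖z‖ → ‖z‖ < 1 → f z ≠ 0)
    (hgne : ∀ z : ℂ, 0 < ‖z‖ → ‖z‖ < 1 → g z ≠ 0)
    (hA : ∀ n : ℕ, 2 ≤ n → ‖a n‖ ≤ 2 / (n : ℝ))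
    (hB : ∀ n : ℕ, 2 ≤ n → ‖b n‖ ≤ 2 / (n : ℝ))
    (r6 : ℝ) (hr6mem : r6 ∈ Set.Ioo (0:ℝ) 1)
    (hr6root : (5 - r6) / (1 - r6) + (6 / r6) * Real.log (1 - r6) = 0)
    (hr6uniq : ∀ r ∈ Set.Ioo (0:ℝ) 1, (5 - r) / (1 - r) + (6 / r) * Real.log (1 - r) = 0 → r = r6)
    (hF : ∀ z : ℂ, F z = z ^ 3 / (f z * g z)) :
    ∀ z : ℂ, 0 < ‖z‖ → ‖z‖ < r6 →
      ‖deriv F z * (z / F z) ^ 2 - 1‖ < 1 := by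
  intro z hz0 hzr
  have hz1 : ‖z‖ < 1 := hzr.trans hr6mem.2
  have hzne : z ≠ 0 := norm_pos_iff.1 hz0
  have hzb : z ∈ Metric.ball (0:ℂ) 1 := by simpa using hz1
  have hfz := hfne z hz0 hz1
  have hgz := hgne z hz0 hz1
  have hdF : deriv F z = (3 * z ^ 2 * (f z * g z) -
      z ^ 3 * (deriv f z * g z + f z * deriv g z)) / (f z * g z) ^ 2 := by
    have hd := ((hasDerivAt_pow 3 z).div
      ((hfa z hzb).differentiableAt.hasDerivAt.mul (hga z hzb).differentiableAt.hasDerivAt)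
      (mul_ne_zero hfz hgz)).deriv
    rw [show F = (fun w => w ^ 3) / (f * g) from funext hF, hd]
    simp
  set r := ‖z‖ with hr
  set x : ℂ := (f z - z) / z with hx
  set y : ℂ := (g z - z) / z with hy
  set X : ℂ := (z * deriv f z - 2 * f z + z) / z with hX
  set Y : ℂ := (z * deriv g z - 2 * g z + z) / z with hY
  have hU : deriv F z * (z / F z) ^ 2 - 1 = -(X + Y + X * y + Y * x + x * y) := by
    rw [hdF, hF z, hx, hy, hX, hY]
    field_simp
    ring
  have bx : ‖x‖ ≤ tailA r / r := by
    rw [hx, norm_div]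
    gcongr
    exact norm_sub_le_of_coeff ha0 ha1 hf hA hz1
  have bY : ‖Y‖ ≤ tailB r / r := by
    rw [hY, norm_div]
    gcongr
    exact norm_deriv_sub_le_of_coeff hb0 hb1 hg hB hz1
  have bX : ‖X‖ ≤ tailB r / r := by
    rw [hX, norm_div]
    gcongr
    exact norm_deriv_sub_le_of_coeff ha0 ha1 hf hA hz1
  have bound_y : ‖y‖ ≤ tailA r / r := by
    rw [hy, norm_div]
    gcongr
    exact norm_sub_le_of_coeff hb0 hb1 hg hB hz1
  have hAB : 2 * (tailB r / r) + tailA r / r < 1 := by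
    have h := two_mul_tailB_add_tailA_lt hz0 hzr hr6mem.2 hr6root
    have e : 2 * (tailB r / r) + tailA r / r = (2 * tailB r + tailA r) / r := by ring
    rw [e, div_lt_one hz0]
    exact h
  set A := tailA r / r
  set B := tailB r / r
  have hA0 : 0 ≤ A := (norm_nonneg x).trans bx
  have hB0 : 0 ≤ B := (norm_nonneg X).trans bX
  rw [hU, norm_neg]
  calc ‖X + Y + X * y + Y * x + x * y‖
      ≤ ‖X‖ + ‖Y‖ + ‖X‖ * ‖y‖ + ‖Y‖ * ‖x‖ + ‖x‖ * ‖y‖ := by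
        simp only [← norm_mul]
        exact norm_add_le_of_le (norm_add_le_of_le (norm_add_le_of_le (norm_add_le _ _) le_rfl)
          le_rfl) le_rfl
    _ ≤ B + B + B * A + B * A + A * A := by gcongr
    -- The bound is `1 - (1 + A) * (1 - (2 * B + A))`.
    _ < 1 := by nlinarith
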